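/- arXiv:1901.02739 — 4 statements merged into one kernel-verified Lean document; each statement's English description precedes it below -/
import Mathlib

section
/- For every α > 0 and β > 0, the function a ↦ Γ(a) / β^a is differentiable at α with derivative β^{-α} (Γ'(α) − Γ(α) log β), and this derivative equals the convergent integral ∫_0^∞ x^{α−1} e^{−βx} log x dx; that is, d/dα [Γ(α)/β^α] = β^{-α}(Γ'(α) − Γ(α) log β) = ∫_0^∞ x^{α−1} e^{−βx} log x dx. -/
/-!
The integral `∫_0^∞ x^(a-1) e^(-βx) dx = Γ(a) / β^a` is the Mellin transform of `x ↦ e^(-βx)` at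
`a`. That function is bounded near `0` and decays faster than any power at infinity, so its Mellin
transform may be differentiated under the integral sign on the half-plane `re s > 0`
(`mellin_exp_neg_mul_hasDerivAt`), which brings down the factor `log x`. The closed form of the
derivative comes from the quotient rule, and the two agree by uniqueness of derivatives.
-/

open MeasureTheory Set

/-- Differentiation under the integral sign for the Mellin transform of `t ↦ e^(-βt)`, together
with convergence of the resulting integral. -/
lemma mellin_exp_neg_mul_hasDerivAt {β : ℝ} (hβ : 0 < β) {s : ℂ} (hs : 0 < s.re) :
    MellinConvergent (fun t : ℝ => Real.log t • (Real.exp (-β * t) : ℂ)) s ∧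
      HasDerivAt (mellin fun t : ℝ => (Real.exp (-β * t) : ℂ))
        (mellin (fun t : ℝ => Real.log t • (Real.exp (-β * t) : ℂ)) s) s := by
  have hc : Continuous fun t : ℝ => (Real.exp (-β * t) : ℂ) := by fun_prop
  refine mellin_hasDerivAt_of_isBigO_rpow (hc.continuousOn.locallyIntegrableOn measurableSet_Ioi)
    ?_ (lt_add_one s.re) ?_ hs
  · rw [← Asymptotics.isBigO_norm_left]
    simp_rw [Complex.norm_real, Asymptotics.isBigO_norm_left]
    exact (isLittleO_exp_neg_mul_rpow_atTop hβ _).isBigO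
  · simp_rw [neg_zero, Real.rpow_zero]
    exact hc.continuousWithinAt.isBigO_one ℝ

lemma mellin_exp_neg_mul_ofReal {β : ℝ} (hβ : 0 < β) {a : ℝ} (ha : 0 < a) :
    mellin (fun t : ℝ => (Real.exp (-β * t) : ℂ)) a = ((Real.Gamma a / β ^ a : ℝ) : ℂ) := by
  have h := Real.integral_rpow_mul_exp_neg_mul_Ioi ha hβ
  rw [Real.div_rpow zero_le_one hβ.le, Real.one_rpow, one_div_mul_eq_div] at h
  rw [← h, ← integral_complex_ofReal]
  refine setIntegral_congr_fun measurableSet_Ioi fun t ht => ?_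
  have ht : 0 < t := ht
  simp [Complex.ofReal_cpow ht.le]

/-- For `α, β > 0`, the map `a ↦ Γ(a) / β^a` is differentiable at `α` with derivative
`β^(-α) (Γ'(α) − Γ(α) log β)`, and this derivative equals the convergent integral
`∫_0^∞ x^(α−1) e^(−βx) log x dx`. -/
theorem hasDerivAt_gamma_div_rpow (α β : ℝ) (hα : 0 < α) (hβ : 0 < β) :
    HasDerivAt (fun a : ℝ => Real.Gamma a / β ^ a)
      (β ^ (-α) * (deriv Real.Gamma α - Real.Gamma α * Real.log β)) α ∧
    IntegrableOn (fun x : ℝ => x ^ (α - 1) * Real.exp (-β * x) * Real.log x) (Ioi 0) ∧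
    β ^ (-α) * (deriv Real.Gamma α - Real.Gamma α * Real.log β)
      = ∫ x in Ioi (0 : ℝ), x ^ (α - 1) * Real.exp (-β * x) * Real.log x := by
  have hquot : HasDerivAt (fun a : ℝ => Real.Gamma a / β ^ a)
      (β ^ (-α) * (deriv Real.Gamma α - Real.Gamma α * Real.log β)) α := by
    have hΓ : HasDerivAt Real.Gamma (deriv Real.Gamma α) α :=
      (Real.differentiableAt_Gamma fun m => by
        have : (0 : ℝ) ≤ m := m.cast_nonneg
        linarith).hasDerivAt
    have hpow : HasDerivAt (fun a : ℝ => β ^ a) (β ^ α * Real.log β) α :=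
      Real.hasStrictDerivAt_const_rpow hβ α |>.hasDerivAt
    have hne : β ^ α ≠ 0 := (Real.rpow_pos_of_pos hβ α).ne'
    refine (hΓ.div hpow hne).congr_deriv ?_
    rw [Real.rpow_neg hβ.le]
    field_simp
  obtain ⟨hconv, hderiv⟩ := mellin_exp_neg_mul_hasDerivAt hβ (s := (α : ℂ)) (by simpa using hα)
  have hint_eq : EqOn
      (fun t : ℝ => (t : ℂ) ^ ((α : ℂ) - 1) • Real.log t • (Real.exp (-β * t) : ℂ))
      (fun t : ℝ => ((t ^ (α - 1) * Real.exp (-β * t) * Real.log t : ℝ) : ℂ)) (Ioi 0) := by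
    intro t ht
    have ht : 0 < t := ht
    simp [Complex.ofReal_cpow ht.le]
    ring
  have hmellin : mellin (fun t : ℝ => Real.log t • (Real.exp (-β * t) : ℂ)) α
      = ((∫ x in Ioi (0 : ℝ), x ^ (α - 1) * Real.exp (-β * x) * Real.log x : ℝ) : ℂ) := by
    rw [← integral_complex_ofReal]
    exact setIntegral_congr_fun measurableSet_Ioi hint_eq
  refine ⟨hquot, ?_, ?_⟩
  · have h := IntegrableOn.congr_fun hconv hint_eq measurableSet_Ioi
    exact h.re
  · rw [hmellin] at hderiv
    refine hquot.unique ?_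
    have hre := hderiv.real_of_complex
    rw [Complex.ofReal_re] at hre
    refine hre.congr_of_eventuallyEq ?_
    filter_upwards [Ioi_mem_nhds hα] with a ha
    rw [mellin_exp_neg_mul_ofReal hβ ha, Complex.ofReal_re]
end

section
/- For all α > 0, α̂ > 0, and β > 0, ∫_0^∞ f(x; α̂, β) · log( f(x; α̂, β) / f(x; α, β) ) dx = log Γ(α) − log Γ(α̂) + (α̂ − α) ψ(α̂); that is, the KL divergence from the Gamma(α̂, β) distribution to the Gamma(α, β) distribution equals log Γ(α) − log Γ(α̂) + (α̂ − α)ψ(α̂), independently of β. -/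
/-!
On `(0, ∞)` the log-ratio of the two densities is
`(αh - α) log β + log Γ(α) - log Γ(αh) + (αh - α) log x`, so the divergence reduces to the total
mass and to the logarithmic moment `∫ x^(a-1) e^(-bx) log x dx` of a Gamma density.

The latter is obtained by differentiating `∫ x^(t-1) e^(-bx) dx = b^(-t) Γ(t)` in `t`. The left side
is the moment generating function at `t` of `log` under the measure `x⁻¹ e^(-bx) dx` on `(0, ∞)`
(`gammaBase`), so Mathlib's differentiation theorem for moment generating functions provides both
the integrability of the logarithmic moment and its value. The resulting `-log b` cancels the
`log β` in the log-ratio, whence the independence of `β`.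
-/

open MeasureTheory Set

/-- The Gamma(a, b) density: `f(x; a, b) = (b^a / Γ(a)) x^(a−1) e^(−bx)` for `x > 0`,
and `0` otherwise. -/
noncomputable def gammaDensity (a b x : ℝ) : ℝ :=
  if 0 < x then (b ^ a / Real.Gamma a) * x ^ (a - 1) * Real.exp (-b * x) else 0

/-- The digamma function `ψ(a) = Γ'(a) / Γ(a)`. -/
noncomputable def digamma (a : ℝ) : ℝ := deriv Real.Gamma a / Real.Gamma a

/-- The measure `x⁻¹ e^(-bx) dx` on `(0, ∞)`; tilting it by `exp (t * log x) = x ^ t` gives the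
unnormalized Gamma(t, b) distribution. -/
noncomputable def gammaBase (b : ℝ) : Measure ℝ :=
  (volume.restrict (Ioi 0)).withDensity
    (fun x => ENNReal.ofReal (x⁻¹ * Real.exp (-b * x)))

lemma base_mul_exp {b t x : ℝ} (hx : 0 < x) :
    (ENNReal.ofReal (x⁻¹ * Real.exp (-b * x))).toReal * Real.exp (t * Real.log x)
      = x ^ (t - 1) * Real.exp (-b * x) := by
  rw [ENNReal.toReal_ofReal (by positivity), mul_comm t, ← Real.rpow_def_of_pos hx,
    Real.rpow_sub_one hx.ne']
  ring

lemma integrable_gammaBase_iff (b t : ℝ) (h : ℝ → ℝ) :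
    Integrable (fun x => h x * Real.exp (t * Real.log x)) (gammaBase b) ↔
      IntegrableOn (fun x => h x * (x ^ (t - 1) * Real.exp (-b * x))) (Ioi 0) := by
  rw [gammaBase, integrable_withDensity_iff_integrable_smul' (by fun_prop) (by simp)]
  refine integrableOn_congr_fun (fun x hx => ?_) measurableSet_Ioi
  simp only [smul_eq_mul]
  rw [mul_left_comm, base_mul_exp hx]

lemma integral_gammaBase (b t : ℝ) (h : ℝ → ℝ) :
    ∫ x, h x * Real.exp (t * Real.log x) ∂(gammaBase b) =
      ∫ x in Ioi 0, h x * (x ^ (t - 1) * Real.exp (-b * x)) := by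
  rw [gammaBase, integral_withDensity_eq_integral_toReal_smul (by fun_prop) (by simp)]
  refine setIntegral_congr_fun measurableSet_Ioi (fun x hx => ?_)
  simp only [smul_eq_mul]
  rw [mul_left_comm, base_mul_exp hx]

lemma integrableOn_gammaKernel {a b : ℝ} (ha : 0 < a) (hb : 0 < b) :
    IntegrableOn (fun x : ℝ => x ^ (a - 1) * Real.exp (-b * x)) (Ioi 0) := by
  simpa using integrableOn_rpow_mul_exp_neg_mul_rpow (p := 1) (s := a - 1) (by linarith)
    one_pos hb

lemma integral_gammaKernel {a b : ℝ} (ha : 0 < a) (hb : 0 < b) :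
    ∫ x in Ioi (0 : ℝ), x ^ (a - 1) * Real.exp (-b * x) = (1 / b) ^ a * Real.Gamma a := by
  simpa using Real.integral_rpow_mul_exp_neg_mul_Ioi ha hb

lemma mem_interior_integrableExpSet {a b : ℝ} (ha : 0 < a) (hb : 0 < b) :
    a ∈ interior (ProbabilityTheory.integrableExpSet Real.log (gammaBase b)) := by
  refine mem_interior.2 ⟨Ioi 0, fun t ht => ?_, isOpen_Ioi, ha⟩
  have := (integrable_gammaBase_iff b t (fun _ => 1)).2
    (by simpa using integrableOn_gammaKernel ht hb)
  simpa [ProbabilityTheory.integrableExpSet] using this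

lemma integrableOn_log_mul_gammaKernel {a b : ℝ} (ha : 0 < a) (hb : 0 < b) :
    IntegrableOn (fun x : ℝ => Real.log x * (x ^ (a - 1) * Real.exp (-b * x))) (Ioi 0) := by
  refine (integrable_gammaBase_iff b a Real.log).1 ?_
  simpa using ProbabilityTheory.integrable_pow_mul_exp_of_mem_interior_integrableExpSet
    (mem_interior_integrableExpSet ha hb) 1

/-- The logarithmic moment of the Gamma kernel, as the derivative in `a` of `b^(-a) Γ(a)`. -/
lemma integral_log_mul_gammaKernel {a b : ℝ} (ha : 0 < a) (hb : 0 < b) :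
    ∫ x in Ioi (0 : ℝ), Real.log x * (x ^ (a - 1) * Real.exp (-b * x)) =
      (1 / b) ^ a * (deriv Real.Gamma a - Real.log b * Real.Gamma a) := by
  have h1 := ProbabilityTheory.hasDerivAt_mgf (mem_interior_integrableExpSet ha hb)
  rw [integral_gammaBase] at h1
  have h2 : ProbabilityTheory.mgf Real.log (gammaBase b) =ᶠ[nhds a]
      fun t => (1 / b) ^ t * Real.Gamma t := by
    filter_upwards [Ioi_mem_nhds ha] with t ht
    have := integral_gammaBase b t (fun _ => 1)
    simp only [one_mul] at this
    rw [ProbabilityTheory.mgf, this, integral_gammaKernel ht hb]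
  have hG : HasDerivAt Real.Gamma (deriv Real.Gamma a) a :=
    (Real.differentiableAt_Gamma fun m => by
      have : (0 : ℝ) ≤ m := m.cast_nonneg
      linarith).hasDerivAt
  have h3 := ((Real.hasStrictDerivAt_const_rpow (one_div_pos.2 hb) a).hasDerivAt.mul hG)
  rw [(h1.congr_of_eventuallyEq h2.symm).unique h3, one_div, Real.log_inv]
  ring

lemma log_gammaDensity {a b x : ℝ} (ha : 0 < a) (hb : 0 < b) (hx : 0 < x) :
    Real.log (gammaDensity a b x) =
      a * Real.log b - Real.log (Real.Gamma a) + (a - 1) * Real.log x - b * x := by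
  have hG := Real.Gamma_pos_of_pos ha
  have h1 := Real.rpow_pos_of_pos hb a
  have h2 := Real.rpow_pos_of_pos hx (a - 1)
  rw [gammaDensity, if_pos hx, Real.log_mul (by positivity) (by positivity),
    Real.log_mul (by positivity) (by positivity), Real.log_div (by positivity) (by positivity),
    Real.log_exp, Real.log_rpow hb, Real.log_rpow hx]
  ring

lemma gammaDensity_pos {a b x : ℝ} (ha : 0 < a) (hb : 0 < b) (hx : 0 < x) :
    0 < gammaDensity a b x := by
  have hG := Real.Gamma_pos_of_pos ha
  rw [gammaDensity, if_pos hx]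
  positivity

/-- KL divergence from Gamma(α̂, β) to Gamma(α, β):
`KL = log Γ(α) − log Γ(α̂) + (α̂ − α) ψ(α̂)`, independently of `β`. -/
theorem kl_gamma_gamma (α αh β : ℝ) (hα : 0 < α) (hαh : 0 < αh) (hβ : 0 < β) :
    ∫ x in Ioi (0 : ℝ), gammaDensity αh β x * Real.log (gammaDensity αh β x / gammaDensity α β x)
      = Real.log (Real.Gamma α) - Real.log (Real.Gamma αh) + (αh - α) * digamma αh := by
  have hG := Real.Gamma_pos_of_pos hαh
  have hb := Real.rpow_pos_of_pos hβ αh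
  set c := (αh - α) * Real.log β + Real.log (Real.Gamma α) - Real.log (Real.Gamma αh) with hc
  have key : ∀ x ∈ Ioi (0 : ℝ),
      gammaDensity αh β x * Real.log (gammaDensity αh β x / gammaDensity α β x) =
        β ^ αh / Real.Gamma αh * c * (x ^ (αh - 1) * Real.exp (-β * x)) +
        β ^ αh / Real.Gamma αh * (αh - α) *
          (Real.log x * (x ^ (αh - 1) * Real.exp (-β * x))) := by
    intro x hx
    rw [Real.log_div (gammaDensity_pos hαh hβ hx).ne' (gammaDensity_pos hα hβ hx).ne',
      log_gammaDensity hαh hβ hx, log_gammaDensity hα hβ hx, gammaDensity, if_pos (mem_Ioi.1 hx), hc]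
    ring
  rw [setIntegral_congr_fun measurableSet_Ioi key,
    integral_add ((integrableOn_gammaKernel hαh hβ).const_mul _)
      ((integrableOn_log_mul_gammaKernel hαh hβ).const_mul _),
    integral_const_mul, integral_const_mul, integral_gammaKernel hαh hβ,
    integral_log_mul_gammaKernel hαh hβ, digamma, one_div, Real.inv_rpow hβ.le, hc]
  field_simp
  ring
end

section
/- Let a, b, β > 0 and let X and Y be independent random variables on a probability space, with X distributed according to the Gamma(a, β) density and Y according to the Gamma(b, β) density. Then for every t ∈ [0, 1], P( X/(X+Y) ≤ t ) = (Γ(a+b) / (Γ(a) Γ(b))) · ∫_0^t s^{a−1} (1−s)^{b−1} ds; that is, X/(X+Y) has the Beta(a, b) distribution, independently of β. -/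
/-!
Write `s = x / (x + y)` and `r = x + y`, so that `x = r s`, `y = r (1 - s)` and `dx dy = |r| dr ds`
(`lintegral_lintegral_sum_ratio`, proved by a translation and a dilation in one variable at a time).
In these coordinates the joint density of `(X, Y)` times `|r|` factors as the Beta(a, b) density
in `s` times the Gamma(a + b, β) density in `r` (`jacobian_mul_gammaDensity`). The latter has total
mass one, so the law of `X / (X + Y)` is Beta(a, b).
-/

open MeasureTheory ProbabilityTheory

open scoped ENNReal

lemma measurable_gammaDensity (a b : ℝ) : Measurable (gammaDensity a b) :=
  Measurable.ite measurableSet_Ioi (by fun_prop) (by fun_prop)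

lemma lintegral_dilation {f : ℝ → ℝ≥0∞} (hf : Measurable f) {r : ℝ} (hr : r ≠ 0) :
    ∫⁻ x, f x = ∫⁻ s, ENNReal.ofReal |r| * f (r * s) := by
  conv_lhs => rw [← Real.smul_map_volume_mul_left hr]
  rw [lintegral_smul_measure, lintegral_map hf (by fun_prop), lintegral_const_mul _ (by fun_prop)]
  rfl

/-- Change of variables `(x, y) = (r s, r (1 - s))`, whose Jacobian is `|r|`. -/
lemma lintegral_lintegral_sum_ratio {F : ℝ → ℝ → ℝ≥0∞} (hF : Measurable (Function.uncurry F)) :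
    ∫⁻ x, ∫⁻ y, F x y = ∫⁻ s, ∫⁻ r, ENNReal.ofReal |r| * F (r * s) (r * (1 - s)) := by
  have hF' : ∀ {α : Type} [MeasurableSpace α] {g h : α → ℝ}, Measurable g → Measurable h →
      Measurable fun z => F (g z) (h z) := fun hg hh => hF.comp (hg.prodMk hh)
  calc ∫⁻ x, ∫⁻ y, F x y = ∫⁻ x, ∫⁻ r, F x (r - x) :=
        lintegral_congr fun x => (lintegral_sub_right_eq_self (F x) x).symm
    _ = ∫⁻ r, ∫⁻ x, F x (r - x) := by
        rw [lintegral_lintegral_swap]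
        exact (hF' (g := fun p : ℝ × ℝ => p.1) (h := fun p => p.2 - p.1)
          (by fun_prop) (by fun_prop)).aemeasurable
    _ = ∫⁻ r, ∫⁻ s, ENNReal.ofReal |r| * F (r * s) (r * (1 - s)) := by
        refine lintegral_congr_ae ?_
        filter_upwards [Measure.ae_ne volume (0 : ℝ)] with r hr
        rw [lintegral_dilation (hF' (by fun_prop) (by fun_prop)) hr]
        simp_rw [mul_sub, mul_one]
    _ = _ := by
        rw [lintegral_lintegral_swap]
        exact (Measurable.mul (by fun_prop) (hF' (g := fun p : ℝ × ℝ => p.1 * p.2)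
          (h := fun p => p.1 * (1 - p.2)) (by fun_prop) (by fun_prop))).aemeasurable

/-- In the coordinates `(s, r)` the joint density of two independent Gamma variables with the same
rate is the product of a Beta density and a Gamma density. -/
lemma jacobian_mul_gammaDensity {a b β : ℝ} (ha : 0 < a) (hb : 0 < b) (hβ : 0 < β) (s : ℝ)
    {r : ℝ} (hr : r ≠ 0) :
    |r| * (gammaDensity a β (r * s) * gammaDensity b β (r * (1 - s)))
      = betaPDFReal a b s * gammaPDFReal (a + b) β r := by
  rcases lt_or_gt_of_ne hr with hr | hr
  · -- `r s` and `r (1 - s)` sum to `r < 0`, so they cannot both be positive.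
    have h : ¬ (0 < r * s ∧ 0 < r * (1 - s)) := by rintro ⟨h1, h2⟩; nlinarith
    rw [gammaPDFReal, if_neg hr.not_ge, mul_zero]
    unfold gammaDensity
    split_ifs <;> simp_all
  · unfold gammaDensity betaPDFReal gammaPDFReal
    simp only [mul_pos_iff_of_pos_left hr, sub_pos, hr.le, if_true, abs_of_pos hr]
    by_cases h0 : 0 < s
    · by_cases h1 : s < 1
      · have h1' : 0 < 1 - s := sub_pos.2 h1
        have hΓ := Real.Gamma_pos_of_pos (add_pos ha hb)
        have hΓa := Real.Gamma_pos_of_pos ha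
        have hΓb := Real.Gamma_pos_of_pos hb
        have hexp : Real.exp (-(β * r))
            = Real.exp (-β * (r * s)) * Real.exp (-β * (r * (1 - s))) := by
          rw [← Real.exp_add]; congr 1; ring
        have hpow : r ^ (a + b - 1) = r * (r ^ (a - 1) * r ^ (b - 1)) := by
          rw [← Real.rpow_add hr, mul_comm, ← Real.rpow_add_one hr.ne']; congr 1; ring
        simp only [h0, h1, and_self, if_true]
        rw [hexp, hpow, Real.rpow_add hβ, Real.mul_rpow hr.le h0.le, Real.mul_rpow hr.le h1'.le,
          beta]
        field_simp
      · simp [h1]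
    · simp [h0]

lemma betaPDFReal_nonneg {a b : ℝ} (ha : 0 < a) (hb : 0 < b) (s : ℝ) : 0 ≤ betaPDFReal a b s := by
  by_cases h : 0 < s ∧ s < 1
  · exact (betaPDFReal_pos h.1 h.2 ha hb).le
  · simp [betaPDFReal, h]

lemma integrable_betaPDFReal {a b : ℝ} (ha : 0 < a) (hb : 0 < b) :
    Integrable (betaPDFReal a b) := by
  refine ⟨by fun_prop, ?_⟩
  rw [hasFiniteIntegral_iff_ofReal (ae_of_all _ (betaPDFReal_nonneg ha hb))]
  exact (lintegral_betaPDF_eq_one ha hb).trans_lt ENNReal.one_lt_top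

lemma setIntegral_betaPDFReal (a b : ℝ) {t : ℝ} (ht : t ∈ Set.Icc (0 : ℝ) 1) :
    ∫ s in Set.Iic t, betaPDFReal a b s
      = (Real.Gamma (a + b) / (Real.Gamma a * Real.Gamma b)) *
          ∫ s in (0 : ℝ)..t, s ^ (a - 1) * (1 - s) ^ (b - 1) := by
  rw [intervalIntegral.integral_of_le ht.1, ← integral_const_mul,
    ← integral_indicator measurableSet_Iic, ← integral_indicator measurableSet_Ioc]
  refine integral_congr_ae ?_
  -- At `s = 1` the two integrands may differ, since `0 ^ (b - 1)` need not vanish.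
  filter_upwards [Measure.ae_ne volume (1 : ℝ)] with s hs
  by_cases hst : s ≤ t
  · by_cases h0 : 0 < s
    · have h1 : s < 1 := lt_of_le_of_ne (hst.trans ht.2) hs
      simp [Set.indicator, hst, h0, h1, betaPDFReal, beta, mul_assoc]
    · simp [Set.indicator, h0, betaPDFReal]
  · simp [Set.indicator, hst]

/-- If `X ~ Gamma(a, β)` and `Y ~ Gamma(b, β)` are independent, then `X/(X+Y)` follows
the Beta(a, b) distribution, independently of `β`:
`P(X/(X+Y) ≤ t) = (Γ(a+b)/(Γ(a)Γ(b))) ∫_0^t s^(a−1)(1−s)^(b−1) ds` for `t ∈ [0,1]`. -/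
theorem gamma_ratio_beta {Ω : Type*} [MeasurableSpace Ω] (P : Measure Ω)
    [IsProbabilityMeasure P] (a b β : ℝ) (ha : 0 < a) (hb : 0 < b) (hβ : 0 < β)
    (X Y : Ω → ℝ) (hX : Measurable X) (hY : Measurable Y)
    (hindep : IndepFun X Y P)
    (hXlaw : P.map X = volume.withDensity fun x => ENNReal.ofReal (gammaDensity a β x))
    (hYlaw : P.map Y = volume.withDensity fun x => ENNReal.ofReal (gammaDensity b β x)) :
    ∀ t ∈ Set.Icc (0 : ℝ) 1,
      P {ω | X ω / (X ω + Y ω) ≤ t}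
        = ENNReal.ofReal ((Real.Gamma (a + b) / (Real.Gamma a * Real.Gamma b)) *
            ∫ s in (0 : ℝ)..t, s ^ (a - 1) * (1 - s) ^ (b - 1)) := by
  intro t ht
  have hfm := fun c => (measurable_gammaDensity c β).ennreal_ofReal
  have hq : Measurable fun p : ℝ × ℝ => p.1 / (p.1 + p.2) := by fun_prop
  have hA : MeasurableSet {p : ℝ × ℝ | p.1 / (p.1 + p.2) ≤ t} := hq measurableSet_Iic
  set A := {p : ℝ × ℝ | p.1 / (p.1 + p.2) ≤ t} with hAdef
  let F : ℝ → ℝ → ℝ≥0∞ := fun x y => A.indicator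
    (fun p => ENNReal.ofReal (gammaDensity a β p.1) * ENNReal.ofReal (gammaDensity b β p.2)) (x, y)
  have hG : Measurable fun p : ℝ × ℝ =>
      ENNReal.ofReal (gammaDensity a β p.1) * ENNReal.ofReal (gammaDensity b β p.2) :=
    ((hfm a).comp measurable_fst).mul ((hfm b).comp measurable_snd)
  have hF : Measurable (Function.uncurry F) := hG.indicator hA
  have hlaw : P {ω | X ω / (X ω + Y ω) ≤ t} = ∫⁻ x, ∫⁻ y, F x y := by
    have h1 : {ω | X ω / (X ω + Y ω) ≤ t} = (fun ω => (X ω, Y ω)) ⁻¹' A := rfl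
    have h2 := (indepFun_iff_map_prod_eq_prod_map_map hX.aemeasurable hY.aemeasurable).1 hindep
    rw [h1, ← Measure.map_apply (hX.prodMk hY) hA, h2, hXlaw, hYlaw,
      prod_withDensity (hfm a) (hfm b), withDensity_apply _ hA, ← lintegral_indicator hA,
      lintegral_prod _ (hG.indicator hA).aemeasurable]
  have hinner : ∀ s, ∫⁻ r, ENNReal.ofReal |r| * F (r * s) (r * (1 - s))
      = (Set.Iic t).indicator (betaPDF a b) s := by
    intro s
    rw [← mul_one ((Set.Iic t).indicator (betaPDF a b) s),
      ← lintegral_gammaPDF_eq_one (add_pos ha hb) hβ,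
      ← lintegral_const_mul (f := gammaPDF (a + b) β) _
        (measurable_gammaPDFReal _ _).ennreal_ofReal]
    refine lintegral_congr_ae ?_
    filter_upwards [Measure.ae_ne volume (0 : ℝ)] with r hr
    have hmem : (r * s, r * (1 - s)) ∈ A ↔ s ∈ Set.Iic t := by
      have : r * s / (r * s + r * (1 - s)) = s := by
        rw [← mul_add, add_sub_cancel, mul_one, mul_div_cancel_left₀ _ hr]
      simp [hAdef, this]
    by_cases hs : s ∈ Set.Iic t
    · simp only [F, Set.indicator_of_mem (hmem.2 hs), Set.indicator_of_mem hs, betaPDF, gammaPDF]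
      have hnn : 0 ≤ gammaDensity a β (r * s) := by
        unfold gammaDensity
        have := Real.Gamma_pos_of_pos ha
        split_ifs <;> positivity
      rw [← ENNReal.ofReal_mul hnn, ← ENNReal.ofReal_mul (abs_nonneg r),
        ← ENNReal.ofReal_mul (betaPDFReal_nonneg ha hb s), jacobian_mul_gammaDensity ha hb hβ s hr]
    · simp only [F, Set.indicator_of_notMem (fun h => hs (hmem.1 h)), Set.indicator_of_notMem hs,
        mul_zero, zero_mul]
  rw [hlaw, lintegral_lintegral_sum_ratio hF, lintegral_congr hinner,
    lintegral_indicator measurableSet_Iic, ← setIntegral_betaPDFReal a b ht,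
    ofReal_integral_eq_lintegral_ofReal (integrable_betaPDFReal ha hb).integrableOn
      (ae_of_all _ (betaPDFReal_nonneg ha hb))]
  rfl
end

section
/- Fix β > 0 and u ∈ (0, 1). For α > 0 let F(·; α, β) denote the Gamma(α, β) cumulative distribution function and let x_α = β^{−1} (u α Γ(α))^{1/α} be the approximate inverse CDF value. Then lim_{α → 0⁺} F(x_α; α, β) = u; that is, the approximation F^{−1}(u; α, β) ≈ β^{−1}(u α Γ(α))^{1/α} is asymptotically exact as the shape parameter α tends to 0. -/
/-!
On `(0, x]` the factor `e^(-βt)` lies between `e^(-βx)` and `1`, and integrating the remaining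
power `β^a / Γ(a) * t^(a-1)` gives `(βx)^a / (a Γ(a))`, which equals `u` exactly at `x = x_a`.
Hence `u * e^(-β x_a) ≤ F(x_a; a, β) ≤ u` (`gammaCdf_bounds`). Since `a Γ(a) = Γ(a + 1) → 1`, the base
`u a Γ(a)` of the power tends to `u < 1`, so its `1/a`-th power, and with it `x_a`, tends to `0`
(`tendsto_approx`), and the two bounds squeeze the CDF to `u`.
-/

open MeasureTheory Set Filter

/-- The exponential factor of the density is squeezed between `e^(-bx)` and `1`; the power part
integrates exactly. -/
lemma gammaCdf_bounds {a b x : ℝ} (ha : 0 < a) (hb : 0 < b) (hx : 0 ≤ x) :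
    (b * x) ^ a / (a * Real.Gamma a) * Real.exp (-b * x) ≤ ∫ t in (0 : ℝ)..x, gammaDensity a b t ∧
      ∫ t in (0 : ℝ)..x, gammaDensity a b t ≤ (b * x) ^ a / (a * Real.Gamma a) := by
  have hG := Real.Gamma_pos_of_pos ha
  set C := b ^ a / Real.Gamma a with hC
  have hC0 : 0 ≤ C := by positivity
  have hpow : IntervalIntegrable (fun t : ℝ => C * t ^ (a - 1)) volume 0 x :=
    (intervalIntegral.intervalIntegrable_rpow' (by linarith)).const_mul C
  have hval : ∫ t in (0 : ℝ)..x, C * t ^ (a - 1) = (b * x) ^ a / (a * Real.Gamma a) := by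
    rw [intervalIntegral.integral_const_mul, integral_rpow (Or.inl (by linarith)),
      Real.mul_rpow hb.le hx, sub_add_cancel, Real.zero_rpow ha.ne', hC]
    field_simp
    ring
  have hfull : IntervalIntegrable (fun t : ℝ => C * t ^ (a - 1) * Real.exp (-b * t)) volume 0 x :=
    hpow.mul_continuousOn (by fun_prop)
  have heq : ∫ t in (0 : ℝ)..x, gammaDensity a b t =
      ∫ t in (0 : ℝ)..x, C * t ^ (a - 1) * Real.exp (-b * t) := by
    rw [intervalIntegral.integral_of_le hx, intervalIntegral.integral_of_le hx]
    refine setIntegral_congr_fun measurableSet_Ioc fun t ht => ?_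
    simp only [gammaDensity, if_pos ht.1, hC]
  rw [heq, ← hval, ← intervalIntegral.integral_mul_const]
  constructor
  · refine intervalIntegral.integral_mono_on hx (hpow.mul_const _) hfull fun t ht => ?_
    have h1 : 0 ≤ t ^ (a - 1) := Real.rpow_nonneg ht.1 _
    have h2 : -b * x ≤ -b * t := by nlinarith [ht.2]
    gcongr
  · refine intervalIntegral.integral_mono_on hx hfull hpow fun t ht => ?_
    have h1 : 0 ≤ t ^ (a - 1) := Real.rpow_nonneg ht.1 _
    have h2 : Real.exp (-b * t) ≤ 1 := Real.exp_le_one_iff.mpr (by nlinarith [ht.1])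
    exact mul_le_of_le_one_right (by positivity) h2

lemma tendsto_approx {u : ℝ} (hu : u ∈ Ioo (0 : ℝ) 1) :
    Tendsto (fun a : ℝ => (u * a * Real.Gamma a) ^ (1 / a)) (nhdsWithin 0 (Ioi 0)) (nhds 0) := by
  obtain ⟨hu0, hu1⟩ := hu
  obtain ⟨c, huc, hc1⟩ := exists_between hu1
  have hbase : Tendsto (fun a : ℝ => u * Real.Gamma (a + 1)) (nhdsWithin 0 (Ioi 0)) (nhds u) := by
    have hcont : ContinuousAt Real.Gamma (0 + 1) := by
      rw [zero_add]
      exact Real.hasDerivAt_Gamma_one.continuousAt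
    have h : ContinuousAt (fun a : ℝ => u * Real.Gamma (a + 1)) 0 :=
      continuousAt_const.mul
        (ContinuousAt.comp (f := fun a : ℝ => a + 1) hcont (by fun_prop))
    have h' := h.tendsto
    simp only [zero_add, Real.Gamma_one, mul_one] at h'
    exact h'.mono_left nhdsWithin_le_nhds
  have hpow : Tendsto (fun a : ℝ => c ^ (1 / a)) (nhdsWithin 0 (Ioi 0)) (nhds 0) := by
    have h := (tendsto_rpow_atTop_of_base_lt_one c (by linarith) hc1).comp
      (tendsto_inv_nhdsGT_zero (𝕜 := ℝ))
    simpa [Function.comp_def, one_div] using h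
  refine tendsto_of_tendsto_of_tendsto_of_le_of_le' tendsto_const_nhds hpow ?_ ?_
  · filter_upwards [self_mem_nhdsWithin] with a ha
    have ha : 0 < a := ha
    have := Real.Gamma_pos_of_pos ha
    positivity
  · filter_upwards [self_mem_nhdsWithin, hbase.eventually_le_const huc] with a ha hle
    have ha : 0 < a := ha
    have := Real.Gamma_pos_of_pos ha
    rw [Real.Gamma_add_one ha.ne', ← mul_assoc] at hle
    exact Real.rpow_le_rpow (by positivity) hle (by positivity)

/-- Asymptotic exactness of the inverse Gamma CDF approximation
`F⁻¹(u; α, β) ≈ β⁻¹ (u α Γ(α))^(1/α)` as the shape `α → 0⁺`: for fixed `β > 0` and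
`u ∈ (0,1)`, the Gamma(α, β) CDF evaluated at `x_α = β⁻¹ (u α Γ(α))^(1/α)` tends to
`u` as `α → 0⁺`. -/
theorem inverse_gamma_cdf_approx (β u : ℝ) (hβ : 0 < β) (hu : u ∈ Ioo (0 : ℝ) 1) :
    Tendsto
      (fun a : ℝ =>
        ∫ t in (0 : ℝ)..(β⁻¹ * (u * a * Real.Gamma a) ^ (1 / a)), gammaDensity a β t)
      (nhdsWithin 0 (Ioi 0)) (nhds u) := by
  have hx : Tendsto (fun a : ℝ => β⁻¹ * (u * a * Real.Gamma a) ^ (1 / a))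
      (nhdsWithin 0 (Ioi 0)) (nhds 0) := by
    simpa using (tendsto_approx hu).const_mul β⁻¹
  have hlow : Tendsto
      (fun a : ℝ => u * Real.exp (-β * (β⁻¹ * (u * a * Real.Gamma a) ^ (1 / a))))
      (nhdsWithin 0 (Ioi 0)) (nhds u) := by
    simpa using ((hx.const_mul (-β)).rexp).const_mul u
  have key : ∀ a : ℝ, 0 < a →
      u * Real.exp (-β * (β⁻¹ * (u * a * Real.Gamma a) ^ (1 / a))) ≤
          ∫ t in (0 : ℝ)..(β⁻¹ * (u * a * Real.Gamma a) ^ (1 / a)), gammaDensity a β t ∧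
        ∫ t in (0 : ℝ)..(β⁻¹ * (u * a * Real.Gamma a) ^ (1 / a)), gammaDensity a β t ≤ u := by
    intro a ha
    have hu0 := hu.1
    have hG := Real.Gamma_pos_of_pos ha
    have hval : (β * (β⁻¹ * (u * a * Real.Gamma a) ^ (1 / a))) ^ a / (a * Real.Gamma a) = u := by
      rw [mul_inv_cancel_left₀ hβ.ne', ← Real.rpow_mul (by positivity),
        one_div_mul_cancel ha.ne', Real.rpow_one]
      field_simp
    have h := gammaCdf_bounds (x := β⁻¹ * (u * a * Real.Gamma a) ^ (1 / a)) ha hβ (by positivity)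
    rwa [hval] at h
  refine tendsto_of_tendsto_of_tendsto_of_le_of_le' hlow tendsto_const_nhds ?_ ?_
  · filter_upwards [self_mem_nhdsWithin] with a ha using (key a ha).1
  · filter_upwards [self_mem_nhdsWithin] with a ha using (key a ha).2
end
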